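/- arXiv:1809.04146 — 6 statements merged into one kernel-verified Lean document; each statement's English description precedes it below -/
import Mathlib

section
/- Let ζ_1,…,ζ_n be vectors in R^d and let ζ̄ = (1/n) Σ_{i=1}^n ζ_i. Let S be a proper sampling over [n] with probability vector p, and let v ∈ R^n satisfy the ESO condition for S. Then E‖ Σ_{i∈S} ζ_i/(n p_i) − ζ̄ ‖² ≤ (1/n²) Σ_{i=1}^n (v_i/p_i) ‖ζ_i‖², where the expectation is over the random set S. -/
/-!
Write the estimation error as `∑ i, (1_S i - p i) • x i` with `x i = ζ i / (n p i)`. Its mean square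
is the covariance matrix `P - p pᵀ` of the inclusion indicators paired entrywise with the Gram
matrix of `x`. By the Schur product theorem, pairing with a Gram matrix is monotone in the Loewner
order, so the ESO condition allows `P - p pᵀ` to be replaced by a diagonal matrix, which only sees
the norms `‖x i‖ ^ 2`.
-/

open scoped BigOperators

open scoped ComplexOrder in
theorem sum_mul_inner_nonneg_of_posSemidef {𝕜 ι E : Type*} [RCLike 𝕜] [Fintype ι]
    [SeminormedAddCommGroup E] [InnerProductSpace 𝕜 E] {M : Matrix ι ι 𝕜} (hM : M.PosSemidef)
    (x : ι → E) : 0 ≤ ∑ i, ∑ j, M i j * inner 𝕜 (x i) (x j) := by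
  have hquad := (hM.hadamard (Matrix.posSemidef_gram 𝕜 x)).dotProduct_mulVec_nonneg 1
  simpa [dotProduct, Matrix.mulVec, Matrix.hadamard_apply, Matrix.gram_apply] using hquad

section Sampling

variable {ι : Type*} [Fintype ι] [DecidableEq ι]

/-- The probability vector `p` of the sampling that draws each `S` with weight `w S`. The weights
are arbitrary reals, so signed samplings are included. -/
def samplingProb (w : Finset ι → ℝ) (i : ι) : ℝ :=
  ∑ S with i ∈ S, w S

/-- The probability matrix `P` of the sampling that draws each `S` with weight `w S`. -/
def samplingMatrix (w : Finset ι → ℝ) : Matrix ι ι ℝ :=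
  .of fun i j => ∑ S with i ∈ S ∧ j ∈ S, w S

/-- The matrix `P - p pᵀ`, which for weights of total mass one is the covariance matrix of the
inclusion indicators `1_S i`. -/
def samplingCov (w : Finset ι → ℝ) : Matrix ι ι ℝ :=
  samplingMatrix w - .of fun i j => samplingProb w i * samplingProb w j

/-- The ESO (expected separable overapproximation) condition `P - p pᵀ ⪯ Diag(p i * v i)`, with the
Loewner order spelled out as positive semidefiniteness of the difference. -/
def SatisfiesESO (w : Finset ι → ℝ) (v : ι → ℝ) : Prop :=
  (Matrix.diagonal (fun i => samplingProb w i * v i) - samplingCov w).PosSemidef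

theorem samplingCov_apply_eq_sum {w : Finset ι → ℝ} (hw : ∑ S, w S = 1) (i j : ι) :
    samplingCov w i j = ∑ S, w S * (((if i ∈ S then 1 else 0) - samplingProb w i) *
      ((if j ∈ S then 1 else 0) - samplingProb w j)) := by
  have hprob (k : ι) : ∑ S, w S * (if k ∈ S then 1 else 0) = samplingProb w k := by
    simp only [samplingProb, Finset.sum_filter, mul_boole]
  have hmatrix : ∑ S, w S * ((if i ∈ S then 1 else 0) * (if j ∈ S then 1 else 0)) =
      samplingMatrix w i j := by
    simp_rw [samplingMatrix, Matrix.of_apply, ite_zero_mul_ite_zero, mul_one, mul_boole,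
      Finset.sum_filter]
  have hexpand (a b p q c : ℝ) :
      c * ((a - p) * (b - q)) = c * (a * b) - c * a * q - c * b * p + c * (p * q) := by
    ring
  simp only [hexpand, Finset.sum_add_distrib, Finset.sum_sub_distrib, ← Finset.sum_mul, hprob,
    hmatrix, hw, samplingCov, Matrix.sub_apply, Matrix.of_apply]
  ring

variable {E : Type*} [SeminormedAddCommGroup E] [InnerProductSpace ℝ E]

theorem variance_sum_eq_sum_samplingCov_mul_inner {w : Finset ι → ℝ} (hw : ∑ S, w S = 1)
    (x : ι → E) :
    ∑ S, w S * ‖∑ i ∈ S, x i - ∑ i, samplingProb w i • x i‖ ^ 2 =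
      ∑ i, ∑ j, samplingCov w i j * inner ℝ (x i) (x j) := by
  have hcentre (S : Finset ι) : ∑ i ∈ S, x i - ∑ i, samplingProb w i • x i =
      ∑ i, ((if i ∈ S then 1 else 0) - samplingProb w i) • x i := by
    simp only [sub_smul, ite_smul, one_smul, zero_smul, Finset.sum_sub_distrib,
      Finset.sum_ite_mem, Finset.univ_inter]
  have hnorm (c : ι → ℝ) :
      ‖∑ i, c i • x i‖ ^ 2 = ∑ i, ∑ j, c i * c j * inner ℝ (x i) (x j) := by
    simp_rw [← real_inner_self_eq_norm_sq, sum_inner, real_inner_smul_left, inner_sum,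
      real_inner_smul_right, Finset.mul_sum, mul_assoc]
  simp only [hcentre, hnorm, samplingCov_apply_eq_sum hw, Finset.mul_sum, Finset.sum_mul]
  rw [Finset.sum_comm]
  refine Finset.sum_congr rfl fun i _ => ?_
  rw [Finset.sum_comm]
  simp only [mul_assoc]

theorem SatisfiesESO.variance_sum_le {w : Finset ι → ℝ} {v : ι → ℝ}
    (hESO : SatisfiesESO w v) (hw : ∑ S, w S = 1) (x : ι → E) :
    ∑ S, w S * ‖∑ i ∈ S, x i - ∑ i, samplingProb w i • x i‖ ^ 2 ≤
      ∑ i, samplingProb w i * v i * ‖x i‖ ^ 2 := by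
  have hgap := sum_mul_inner_nonneg_of_posSemidef hESO x
  simp only [Matrix.sub_apply, sub_mul, Finset.sum_sub_distrib, Matrix.diagonal_apply, ite_mul,
    zero_mul, Finset.sum_ite_eq, Finset.mem_univ, if_true, real_inner_self_eq_norm_sq] at hgap
  rw [variance_sum_eq_sum_samplingCov_mul_inner hw]
  exact sub_nonneg.mp hgap

theorem variance_upper_bound_arbitrary_sampling_general {w : Finset ι → ℝ} {v : ι → ℝ}
    (hESO : SatisfiesESO w v) (hw : ∑ S, w S = 1) (hproper : ∀ i, samplingProb w i ≠ 0)
    (ζ : ι → E) :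
    ∑ S, w S * ‖(∑ i ∈ S, ((Fintype.card ι : ℝ) * samplingProb w i)⁻¹ • ζ i) -
        (Fintype.card ι : ℝ)⁻¹ • ∑ i, ζ i‖ ^ 2
      ≤ (Fintype.card ι : ℝ)⁻¹ ^ 2 * ∑ i, (v i / samplingProb w i) * ‖ζ i‖ ^ 2 := by
  have hmean : (Fintype.card ι : ℝ)⁻¹ • ∑ i, ζ i =
      ∑ i, samplingProb w i • ((Fintype.card ι : ℝ) * samplingProb w i)⁻¹ • ζ i := by
    rw [Finset.smul_sum]
    refine Finset.sum_congr rfl fun i _ => ?_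
    rw [smul_smul, mul_inv_rev, mul_inv_cancel_left₀ (hproper i)]
  have hdiag (i : ι) :
      samplingProb w i * v i * ‖((Fintype.card ι : ℝ) * samplingProb w i)⁻¹ • ζ i‖ ^ 2 =
        (Fintype.card ι : ℝ)⁻¹ ^ 2 * (v i / samplingProb w i * ‖ζ i‖ ^ 2) := by
    have hp := hproper i
    rw [norm_smul, mul_pow, Real.norm_eq_abs, sq_abs, mul_inv]
    field_simp
  rw [hmean, Finset.mul_sum]
  exact (hESO.variance_sum_le hw _).trans_eq (Finset.sum_congr rfl fun i _ => hdiag i)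

end Sampling

/-- Lemma 1 (key lemma): variance upper bound for the importance-weighted estimator
under an arbitrary proper sampling satisfying the ESO condition. -/
theorem variance_upper_bound_arbitrary_sampling {n d : ℕ}
    (w : Finset (Fin n) → ℝ) (hw0 : ∀ S, 0 ≤ w S) (hw1 : ∑ S, w S = 1)
    (p : Fin n → ℝ)
    (hp : ∀ i, p i = ∑ S ∈ Finset.univ.filter (fun S : Finset (Fin n) => i ∈ S), w S)
    (hproper : ∀ i, 0 < p i)
    (P : Matrix (Fin n) (Fin n) ℝ)
    (hP : ∀ i j, P i j =
      ∑ S ∈ Finset.univ.filter (fun S : Finset (Fin n) => i ∈ S ∧ j ∈ S), w S)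
    (v : Fin n → ℝ)
    (hESO : (Matrix.diagonal (fun i => p i * v i) -
      (P - Matrix.of fun i j => p i * p j)).PosSemidef)
    (ζ : Fin n → EuclideanSpace ℝ (Fin d)) :
    ∑ S : Finset (Fin n), w S *
        ‖(∑ i ∈ S, ((n : ℝ) * p i)⁻¹ • ζ i) - (n : ℝ)⁻¹ • ∑ i, ζ i‖ ^ 2
      ≤ (n : ℝ)⁻¹ ^ 2 * ∑ i, (v i / p i) * ‖ζ i‖ ^ 2 := by
  obtain rfl : p = samplingProb w := funext hp
  obtain rfl : P = samplingMatrix w := Matrix.ext hP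
  simpa only [Fintype.card_fin] using
    variance_upper_bound_arbitrary_sampling_general hESO hw1 (fun i => (hproper i).ne') ζ
end

section
/- Let S be a proper sampling over [n] with probability vector p. If a vector v ∈ R^n satisfies the ESO condition for S, then necessarily v_i ≥ 1 − p_i for every i ∈ [n]. -/
open scoped BigOperators

section LoewnerBound

variable {ι R : Type*} [DecidableEq ι] [Ring R] [PartialOrder R] [StarRing R] [IsOrderedAddMonoid R]

lemma apply_self_le_of_posSemidef_diagonal_sub {A : Matrix ι ι R} {d : ι → R}
    (h : (Matrix.diagonal d - A).PosSemidef) (i : ι) : A i i ≤ d i := by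
  simpa using h.diag_nonneg (i := i)

lemma one_sub_le_of_posSemidef_diagonal_sub [PosMulReflectLE R] {P : Matrix ι ι R} {p v : ι → R}
    (h : (Matrix.diagonal (fun i => p i * v i) - (P - Matrix.vecMulVec p p)).PosSemidef)
    {i : ι} (hPp : P i i = p i) (hpos : 0 < p i) : 1 - p i ≤ v i := by
  refine le_of_mul_le_mul_left ?_ hpos
  calc p i * (1 - p i) = (P - Matrix.vecMulVec p p) i i := by
        simp [hPp, mul_sub, Matrix.vecMulVec_apply]
    _ ≤ p i * v i := apply_self_le_of_posSemidef_diagonal_sub h i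

end LoewnerBound

theorem eso_implies_v_ge_one_sub_p_general {ι R : Type*} [Fintype ι] [DecidableEq ι]
    [Ring R] [PartialOrder R] [StarRing R] [IsOrderedAddMonoid R] [PosMulReflectLE R]
    {w : Finset ι → R} {p : ι → R} (hp : ∀ i, p i = ∑ S with i ∈ S, w S)
    {P : Matrix ι ι R} (hP : ∀ i j, P i j = ∑ S with i ∈ S ∧ j ∈ S, w S) {v : ι → R}
    (hESO : (Matrix.diagonal (fun i => p i * v i) - (P - Matrix.vecMulVec p p)).PosSemidef)
    {i : ι} (hpos : 0 < p i) : 1 - p i ≤ v i :=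
  have hPp : P i i = p i := by simp only [hP, hp, and_self]
  one_sub_le_of_posSemidef_diagonal_sub hESO hPp hpos

/-- Any vector `v` satisfying the ESO condition for a proper sampling must satisfy
`v i ≥ 1 - p i` for all `i`. -/
theorem eso_implies_v_ge_one_sub_p {n : ℕ}
    (w : Finset (Fin n) → ℝ) (hw0 : ∀ S, 0 ≤ w S) (hw1 : ∑ S, w S = 1)
    (p : Fin n → ℝ)
    (hp : ∀ i, p i = ∑ S ∈ Finset.univ.filter (fun S : Finset (Fin n) => i ∈ S), w S)
    (hproper : ∀ i, 0 < p i)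
    (P : Matrix (Fin n) (Fin n) ℝ)
    (hP : ∀ i j, P i j =
      ∑ S ∈ Finset.univ.filter (fun S : Finset (Fin n) => i ∈ S ∧ j ∈ S), w S)
    (v : Fin n → ℝ)
    (hESO : (Matrix.diagonal (fun i => p i * v i) -
      (P - Matrix.of fun i j => p i * p j)).PosSemidef) :
    ∀ i, 1 - p i ≤ v i := by
  intro i
  exact eso_implies_v_ge_one_sub_p_general hp hP hESO (hproper i)
end

section
/- Let S be an arbitrary proper sampling over [n] with probability vector p and probability matrix P. Then P − p p^⊤ ⪯ n·Diag(p_1(1−p_1), …, p_n(1−p_n)); in other words, the ESO condition for S holds with the choice v_i = n(1 − p_i) for all i. -/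
open scoped BigOperators

/-!
Covariance matrices are positive semidefinite because a pairwise-difference identity gives
`2 (W ∑ₖ wₖ fₖ fₖ* - (∑ₖ wₖ fₖ) (∑ₖ wₖ fₖ)*) = ∑ₖ ∑ₗ wₖ wₗ (fₖ - fₗ) (fₖ - fₗ)*`, where `W = ∑ₖ wₖ`.
Taking for `f` the indicator vectors of the values of a sampling shows `0 ⪯ P - p pᵀ`. Taking the
standard basis vectors with unit weights shows `0 ⪯ n I - J`, where `J` is the all-ones matrix;
by the Schur product theorem `0 ⪯ (n I - J) ⊙ M = n Diag(M) - M` for every `M ⪰ 0`. The claim is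
the case `M = P - p pᵀ`, whose diagonal entries are `pᵢ - pᵢ²`.
-/

section Covariance

open Finset Matrix
open scoped ComplexOrder

theorem sum_sum_mul_sub_mul_sub {κ R : Type*} [CommRing R] (s : Finset κ) (w x y : κ → R) :
    ∑ k ∈ s, ∑ l ∈ s, w k * w l * ((x k - x l) * (y k - y l)) =
      2 * ((∑ k ∈ s, w k) * ∑ k ∈ s, w k * (x k * y k) -
        (∑ k ∈ s, w k * x k) * ∑ k ∈ s, w k * y k) := by
  calc ∑ k ∈ s, ∑ l ∈ s, w k * w l * ((x k - x l) * (y k - y l))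
      = ∑ k ∈ s, ∑ l ∈ s, (w k * (x k * y k) * w l + w k * (w l * (x l * y l)) -
          w k * x k * (w l * y l) - w k * y k * (w l * x l)) :=
        sum_congr rfl fun k _ => sum_congr rfl fun l _ => by ring
    _ = _ := by
        simp only [sum_sub_distrib, sum_add_distrib, ← sum_mul_sum]
        ring

variable {ι 𝕜 : Type*} [RCLike 𝕜]

theorem posSemidef_sum_smul_sub_vecMulVec_sum [Finite ι] {κ : Type*} (s : Finset κ) {w : κ → ℝ}
    (hw : ∀ k ∈ s, 0 ≤ w k) (f : κ → ι → 𝕜) :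
    ((∑ k ∈ s, w k) • ∑ k ∈ s, w k • vecMulVec (f k) (star (f k)) -
      vecMulVec (∑ k ∈ s, w k • f k) (star (∑ k ∈ s, w k • f k))).PosSemidef := by
  have hpairs : (2⁻¹ : ℝ) • ∑ k ∈ s, ∑ l ∈ s,
      (w k * w l) • vecMulVec (f k - f l) (star (f k - f l)) =
      (∑ k ∈ s, w k) • ∑ k ∈ s, w k • vecMulVec (f k) (star (f k)) -
      vecMulVec (∑ k ∈ s, w k • f k) (star (∑ k ∈ s, w k • f k)) := by
    rw [inv_smul_eq_iff₀ two_ne_zero]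
    ext i j
    simpa [vecMulVec_apply, Matrix.sum_apply, RCLike.real_smul_eq_coe_mul,
        RCLike.algebraMap_eq_ofReal, RCLike.ofReal_ofNat] using
      sum_sum_mul_sub_mul_sub s (fun k => (w k : 𝕜)) (fun k => f k i) (fun k => star (f k j))
  rw [← hpairs]
  exact (posSemidef_sum s fun k hk => posSemidef_sum s fun l hl =>
    (posSemidef_vecMulVec_self_star _).smul (mul_nonneg (hw k hk) (hw l hl))).smul (by positivity)

variable [Fintype ι] [DecidableEq ι]

theorem posSemidef_card_smul_one_sub_of_one :
    ((Fintype.card ι : ℝ) • (1 : Matrix ι ι 𝕜) - of fun _ _ => 1).PosSemidef := by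
  convert posSemidef_sum_smul_sub_vecMulVec_sum (𝕜 := 𝕜) univ (w := fun _ : ι => 1)
    (fun _ _ => zero_le_one) (fun k => Pi.single k 1) using 1
  ext i j
  simp [Matrix.sum_apply, vecMulVec_apply, Pi.single_apply, Matrix.one_apply]

theorem posSemidef_card_smul_diagonal_diag_sub {M : Matrix ι ι 𝕜} (hM : M.PosSemidef) :
    ((Fintype.card ι : ℝ) • diagonal M.diag - M).PosSemidef := by
  have hschur : ((Fintype.card ι : ℝ) • (1 : Matrix ι ι 𝕜) - of fun _ _ => 1) ⊙ M =
      (Fintype.card ι : ℝ) • diagonal M.diag - M := by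
    rw [← one_hadamard, ← smul_hadamard]
    ext i j
    simp only [hadamard_apply, Matrix.sub_apply, of_apply, sub_mul, one_mul]
  exact hschur ▸ posSemidef_card_smul_one_sub_of_one.hadamard hM

end Covariance

section Sampling

open Finset Matrix

variable {ι : Type*} [Fintype ι] [DecidableEq ι]

/-- The probability vector `p` of a sampling: `inclusionProb w i` is the probability that a random
subset contains `i`. The sampling is encoded by the weights `w S = Prob(S)` of the subsets `S`. -/
def inclusionProb (w : Finset ι → ℝ) (i : ι) : ℝ :=
  ∑ S with i ∈ S, w S

/-- The probability matrix `P` of the sampling with weights `w`, giving the probability that a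
random subset contains both `i` and `j`; it carries the pairwise correlations that enter the ESO
condition. -/
def inclusionProbMatrix (w : Finset ι → ℝ) : Matrix ι ι ℝ :=
  of fun i j => ∑ S with i ∈ S ∧ j ∈ S, w S

theorem diag_inclusionProbMatrix (w : Finset ι → ℝ) :
    (inclusionProbMatrix w).diag = inclusionProb w := by
  ext i
  simp [inclusionProbMatrix, inclusionProb]

theorem inclusionProb_eq_sum_smul_indicator (w : Finset ι → ℝ) :
    inclusionProb w = ∑ S, w S • (S : Set ι).indicator 1 := by
  ext i
  simp [inclusionProb, Set.indicator_apply, sum_filter]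

theorem inclusionProbMatrix_eq_sum_smul_vecMulVec_indicator (w : Finset ι → ℝ) :
    inclusionProbMatrix w =
      ∑ S, w S • vecMulVec ((S : Set ι).indicator 1) ((S : Set ι).indicator 1) := by
  ext i j
  simp [inclusionProbMatrix, Matrix.sum_apply, vecMulVec_apply, Set.indicator_apply,
    sum_filter, ← ite_and, and_comm]

theorem posSemidef_inclusionProbMatrix_sub_vecMulVec {w : Finset ι → ℝ} (hw0 : ∀ S, 0 ≤ w S)
    (hw1 : ∑ S, w S = 1) :
    (inclusionProbMatrix w - vecMulVec (inclusionProb w) (inclusionProb w)).PosSemidef := by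
  simpa only [hw1, one_smul, star_trivial, ← inclusionProb_eq_sum_smul_indicator,
    ← inclusionProbMatrix_eq_sum_smul_vecMulVec_indicator] using
    posSemidef_sum_smul_sub_vecMulVec_sum univ (fun S _ => hw0 S)
      fun S : Finset ι => (S : Set ι).indicator (1 : ι → ℝ)

theorem eso_holds_with_n_one_sub_p_general {w : Finset ι → ℝ} (hw0 : ∀ S, 0 ≤ w S)
    (hw1 : ∑ S, w S = 1) :
    (diagonal (fun i => inclusionProb w i * (Fintype.card ι * (1 - inclusionProb w i))) -
      (inclusionProbMatrix w - vecMulVec (inclusionProb w) (inclusionProb w))).PosSemidef := by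
  have hdiag : (Fintype.card ι : ℝ) •
      diagonal (inclusionProbMatrix w - vecMulVec (inclusionProb w) (inclusionProb w)).diag =
      diagonal fun i => inclusionProb w i * (Fintype.card ι * (1 - inclusionProb w i)) := by
    rw [diag_sub, diag_inclusionProbMatrix, diag_vecMulVec, ← diagonal_smul]
    congr 1 with i
    simp only [Pi.smul_apply, Pi.sub_apply, Pi.mul_apply, smul_eq_mul]
    ring
  rw [← hdiag]
  exact posSemidef_card_smul_diagonal_diag_sub
    (posSemidef_inclusionProbMatrix_sub_vecMulVec hw0 hw1)

end Sampling

/-- For an arbitrary proper sampling, the ESO condition always holds with the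
choice `v i = n * (1 - p i)`, i.e. `P - p pᵀ ⪯ n · Diag(p i (1 - p i))`. -/
theorem eso_holds_with_n_one_sub_p {n : ℕ}
    (w : Finset (Fin n) → ℝ) (hw0 : ∀ S, 0 ≤ w S) (hw1 : ∑ S, w S = 1)
    (p : Fin n → ℝ)
    (hp : ∀ i, p i = ∑ S ∈ Finset.univ.filter (fun S : Finset (Fin n) => i ∈ S), w S)
    (hproper : ∀ i, 0 < p i)
    (P : Matrix (Fin n) (Fin n) ℝ)
    (hP : ∀ i j, P i j =
      ∑ S ∈ Finset.univ.filter (fun S : Finset (Fin n) => i ∈ S ∧ j ∈ S), w S) :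
    (Matrix.diagonal (fun i => p i * ((n : ℝ) * (1 - p i))) -
      (P - Matrix.of fun i j => p i * p j)).PosSemidef := by
  obtain rfl : p = inclusionProb w := funext hp
  obtain rfl : P = inclusionProbMatrix w := Matrix.ext hP
  simpa only [Fintype.card_fin, Matrix.vecMulVec] using eso_holds_with_n_one_sub_p_general hw0 hw1
end

section
/- Let 0 < L_1 ≤ L_2 ≤ ⋯ ≤ L_n be positive reals and let 0 < b ≤ n. Let k be the largest integer in [1,n] satisfying 0 < b + k − n ≤ (Σ_{i=1}^k L_i)/L_k (assume such k exists). Define p* ∈ R^n by p*_i = (b + k − n)·L_i / (Σ_{j=1}^k L_j) for i ≤ k and p*_i = 1 for i > k. Then p* is feasible, i.e. Σ_{i=1}^n p*_i = b and 0 < p*_i ≤ 1 for all i, and p* minimizes Ω(p) = Σ_{i=1}^n L_i²/p_i over the feasible set {p ∈ R^n : Σ_{i=1}^n p_i = b, 0 < p_i ≤ 1 for all i}; that is, Σ_{i=1}^n L_i²/p*_i ≤ Σ_{i=1}^n L_i²/p_i for every feasible p. -/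
open scoped BigOperators

/-!
Write `S = ∑_{i<k} L i`, `c = b + k - n` and `t = S / c`. Admissibility of `k` says `L i ≤ t` for
`i < k`, while failure of admissibility at `k + 1` says `t < L i` for `i ≥ k`; hence
`p* i = min (L i / t) 1`. Moreover `t ^ 2` is a Lagrange multiplier for the constraint
`∑ i, p i = b`: on `(0, 1]` the function `x ↦ L i ^ 2 / x + t ^ 2 * x` is minimal at `p* i`.
Summing these minimality inequalities, the linear terms cancel.
-/

variable {K : Type*} [Field K] [LinearOrder K] [IsStrictOrderedRing K]

section CappedRatio

variable {a p t : K}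

lemma min_div_one_eq_ite (ht : 0 < t) {P : Prop} [Decidable P] (hle : P → a ≤ t)
    (hge : ¬P → t ≤ a) : min (a / t) 1 = if P then a / t else 1 := by
  split_ifs with h
  · exact min_eq_left ((div_le_one ht).2 (hle h))
  · exact min_eq_right ((one_le_div ht).2 (hge h))

lemma two_mul_mul_le_sq_div_add (hp : 0 < p) : 2 * a * t ≤ a ^ 2 / p + t ^ 2 * p := by
  have hsq : a ^ 2 / p + t ^ 2 * p - 2 * a * t = (a - t * p) ^ 2 / p := by
    field_simp
    ring
  exact sub_nonneg.1 (hsq ▸ by positivity)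

lemma sq_add_sq_le_sq_div_add (ht : 0 ≤ t) (hta : t ≤ a) (hp : 0 < p) (hp1 : p ≤ 1) :
    a ^ 2 + t ^ 2 ≤ a ^ 2 / p + t ^ 2 * p := by
  have hsq : t ^ 2 ≤ a ^ 2 := pow_le_pow_left₀ ht hta 2
  have hdiv : a ^ 2 ≤ a ^ 2 / p := le_div_self (sq_nonneg a) hp hp1
  have hslack : t ^ 2 * (1 - p) ≤ a ^ 2 / p * (1 - p) :=
    mul_le_mul_of_nonneg_right (hsq.trans hdiv) (sub_nonneg.2 hp1)
  have hcancel : a ^ 2 / p * p = a ^ 2 := div_mul_cancel₀ _ hp.ne'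
  linarith

lemma sq_div_add_min_le (ha : 0 < a) (ht : 0 < t) (hp : 0 < p) (hp1 : p ≤ 1) :
    a ^ 2 / min (a / t) 1 + t ^ 2 * min (a / t) 1 ≤ a ^ 2 / p + t ^ 2 * p := by
  rcases le_total a t with hat | hta
  · have hvalue : a ^ 2 / (a / t) + t ^ 2 * (a / t) = 2 * a * t := by
      field_simp
      ring
    rw [min_eq_left ((div_le_one ht).2 hat), hvalue]
    exact two_mul_mul_le_sq_div_add hp
  · rw [min_eq_right ((one_le_div ht).2 hta), div_one, mul_one]
    exact sq_add_sq_le_sq_div_add ht.le hta hp hp1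

lemma sum_sq_div_min_le_sum_sq_div {ι : Type*} {s : Finset ι} {a p : ι → K} (ht : 0 < t)
    (ha : ∀ i ∈ s, 0 < a i) (hp : ∀ i ∈ s, 0 < p i ∧ p i ≤ 1)
    (hsum : ∑ i ∈ s, p i ≤ ∑ i ∈ s, min (a i / t) 1) :
    ∑ i ∈ s, a i ^ 2 / min (a i / t) 1 ≤ ∑ i ∈ s, a i ^ 2 / p i := by
  have hlagrange := Finset.sum_le_sum fun i hi =>
    sq_div_add_min_le (ha i hi) ht (hp i hi).1 (hp i hi).2
  simp only [Finset.sum_add_distrib, ← Finset.mul_sum] at hlagrange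
  have hbudget := mul_le_mul_of_nonneg_left hsum (sq_nonneg t)
  linarith

end CappedRatio

section CapThreshold

variable {n k : ℕ} {L : Fin n → K} {b : K}

/-- The threshold `t` for which the allocation `i ↦ min (L i / t) 1` has sum `b`, provided that
exactly the first `k` entries satisfy `L i ≤ t`, the others being capped at `1`. It is meaningful
only for `0 < b + k - n`. -/
def capThreshold (L : Fin n → K) (b : K) (k : ℕ) : K :=
  (∑ i ∈ {i : Fin n | (i : ℕ) < k}, L i) / (b + k - n)

lemma capThreshold_pos (hL : ∀ i, 0 < L i) (hn : 0 < n) (hk : 0 < k) (hc : 0 < b + k - n) :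
    0 < capThreshold L b k :=
  div_pos (Finset.sum_pos (fun i _ => hL i) ⟨⟨0, hn⟩, by simpa using hk⟩) hc

lemma le_capThreshold_iff {x : K} (hx : 0 < x) (hc : 0 < b + k - n) :
    x ≤ capThreshold L b k ↔ b + k - n ≤ (∑ i ∈ {i : Fin n | (i : ℕ) < k}, L i) / x :=
  le_div_comm₀ hx hc

lemma sum_filter_val_lt_succ {M : Type*} [AddCommMonoid M] (f : Fin n → M) (hk : k < n) :
    ∑ i ∈ {i : Fin n | (i : ℕ) < k + 1}, f i =
      (∑ i ∈ {i : Fin n | (i : ℕ) < k}, f i) + f ⟨k, hk⟩ := by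
  have hinsert : ({i | (i : ℕ) < k + 1} : Finset (Fin n)) =
      insert ⟨k, hk⟩ ({i | (i : ℕ) < k} : Finset (Fin n)) := by
    ext i
    simp [Fin.ext_iff, Nat.le_iff_lt_or_eq, or_comm]
  rw [hinsert, Finset.sum_insert (by simp), add_comm]

lemma capThreshold_lt_apply_iff (hk : k < n) (hLk : 0 < L ⟨k, hk⟩) (hc : 0 < b + k - n) :
    capThreshold L b k < L ⟨k, hk⟩ ↔
      (∑ i ∈ {i : Fin n | (i : ℕ) < k + 1}, L i) / L ⟨k, hk⟩ < b + (k + 1 : ℕ) - n := by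
  have hshift : b + (k + 1 : ℕ) - n = b + k - n + 1 := by
    push_cast
    ring
  rw [sum_filter_val_lt_succ L hk, add_div, div_self hLk.ne', hshift, add_lt_add_iff_right,
    capThreshold, div_lt_comm₀ hc hLk]

lemma sum_min_div_capThreshold (hkn : k ≤ n) (ht : 0 < capThreshold L b k)
    (hle : ∀ i : Fin n, (i : ℕ) < k → L i ≤ capThreshold L b k)
    (hge : ∀ i : Fin n, ¬(i : ℕ) < k → capThreshold L b k ≤ L i) :
    ∑ i, min (L i / capThreshold L b k) 1 = b := by
  have hS : ∑ i ∈ {i : Fin n | (i : ℕ) < k}, L i ≠ 0 := (div_ne_zero_iff.1 ht.ne').1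
  have huncapped : (∑ i ∈ {i : Fin n | (i : ℕ) < k}, L i) / capThreshold L b k = b + k - n :=
    div_div_cancel₀ hS
  have hcapped : (Finset.card {i : Fin n | ¬(i : ℕ) < k} : K) = n - k := by
    rw [← Finset.compl_filter, Finset.card_compl, Fintype.card_fin, Fin.card_filter_val_lt,
      min_eq_right hkn, Nat.cast_sub hkn]
  simp_rw [fun i => min_div_one_eq_ite ht (hle i) (hge i)]
  rw [Finset.sum_ite, ← Finset.sum_div, huncapped, Finset.sum_const, nsmul_one, hcapped]
  ring

end CapThreshold

/-- Lemma on the optimal probabilities: `p*` defined from the largest admissible `k`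
is feasible and minimizes `Ω(p) = Σ L i ^ 2 / p i` over all probability vectors
with sum `b` and entries in `(0,1]`. -/
theorem optimal_probabilities_minimize_omega {n : ℕ} (hn : 0 < n)
    (L : Fin n → ℝ) (hLpos : ∀ i, 0 < L i) (hLmono : Monotone L)
    (b : ℝ) (hb0 : 0 < b) (hbn : b ≤ n)
    (k : ℕ) (hk1 : 1 ≤ k) (hkn : k ≤ n)
    (hkcond : 0 < b + k - n ∧
      b + k - n ≤ (∑ i ∈ Finset.univ.filter (fun i : Fin n => (i : ℕ) < k), L i) /
        L ⟨k - 1, by omega⟩)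
    (hkmax : ∀ k' : ℕ, ∀ _hk' : k < k', ∀ _hk'n : k' ≤ n,
      ¬ (0 < b + k' - n ∧
        b + k' - n ≤ (∑ i ∈ Finset.univ.filter (fun i : Fin n => (i : ℕ) < k'), L i) /
          L ⟨k' - 1, by omega⟩))
    (pstar : Fin n → ℝ)
    (hpstar : ∀ i : Fin n, pstar i =
      if (i : ℕ) < k then
        (b + k - n) * L i / (∑ j ∈ Finset.univ.filter (fun j : Fin n => (j : ℕ) < k), L j)
      else 1) :
    (∑ i, pstar i = b) ∧ (∀ i, 0 < pstar i ∧ pstar i ≤ 1) ∧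
    (∀ p : Fin n → ℝ, (∑ i, p i = b) → (∀ i, 0 < p i ∧ p i ≤ 1) →
      ∑ i, L i ^ 2 / pstar i ≤ ∑ i, L i ^ 2 / p i) := by
  obtain ⟨hc, hcond⟩ := hkcond
  have ht : 0 < capThreshold L b k := capThreshold_pos hLpos hn hk1 hc
  have hle (i : Fin n) (hi : (i : ℕ) < k) : L i ≤ capThreshold L b k :=
    (hLmono (Fin.mk_le_mk.2 (Nat.le_sub_one_of_lt hi))).trans
      ((le_capThreshold_iff (hLpos _) hc).2 hcond)
  have hge (i : Fin n) (hi : ¬(i : ℕ) < k) : capThreshold L b k ≤ L i := by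
    have hk : k < n := by omega
    have hc' : 0 < b + (k + 1 : ℕ) - n := by
      push_cast
      linarith
    have hfail := not_le.1 fun h => hkmax (k + 1) k.lt_succ_self hk ⟨hc', h⟩
    exact ((capThreshold_lt_apply_iff hk (hLpos _) hc).2 hfail).le.trans
      (hLmono (Fin.mk_le_mk.2 (not_lt.1 hi)))
  obtain rfl : pstar = fun i => min (L i / capThreshold L b k) 1 := by
    funext i
    rw [hpstar, min_div_one_eq_ite ht (hle i) (hge i), capThreshold, div_div_eq_mul_div, mul_comm]
  have hsum := sum_min_div_capThreshold hkn ht hle hge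
  exact ⟨hsum, fun i => ⟨lt_min (div_pos (hLpos i) ht) one_pos, min_le_right _ _⟩,
    fun p hp hp01 => sum_sq_div_min_le_sum_sq_div ht (fun i _ => hLpos i) (fun i _ => hp01 i)
      (hp.trans hsum.symm).le⟩
end

section
/- Let L_1,…,L_n > 0, let 0 < b ≤ n, assume b·max_i L_i ≤ Σ_{i=1}^n L_i, and set p_i = b·L_i/(Σ_{j=1}^n L_j), so p_i ∈ (0,1] and Σ_i p_i = b. With L̄ = (1/n) Σ_{i=1}^n L_i, the quantity α for the independent sampling with these probabilities satisfies α_{S*} := (b/n²)·Σ_{i=1}^n (1−p_i) L_i²/p_i / L̄² = 1 − b·(Σ_{i=1}^n L_i²)/(Σ_{i=1}^n L_i)², and this quantity is at most (n−b)/n. -/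
/-!
When the probabilities are proportional to `L`, the factor `L i ^ 2 / p i` is a constant multiple
of `L i`, and the normalization turns `α` into the `L`-weighted mean `(∑ v i * L i) / ∑ L i` of
the ESO vector `v`. For `v = 1 - p` this mean is `1 - b * (∑ L i ^ 2) / (∑ L i) ^ 2`, and the
Cauchy–Schwarz inequality `(∑ L i) ^ 2 ≤ n * ∑ L i ^ 2` bounds it by its value `1 - b / n` at
constant `L`.
-/

open scoped BigOperators

section ImportanceSampling

open Finset

variable {ι K : Type*} [Field K] {s : Finset ι} {b : K} {L : ι → K}

/-- The importance-sampling probabilities, proportional to the smoothness constants `L` and scaled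
so that the expected number of sampled indices in `s` is `b`. -/
def importanceProb (s : Finset ι) (b : K) (L : ι → K) (i : ι) : K :=
  b * L i / ∑ j ∈ s, L j

/-- The complexity constant `α` of a sampling of `s` with expected size `b`, probability vector `p`
and ESO vector `v`, for smoothness constants `L`; the last factor is the squared mean of `L`. -/
def samplingAlpha (s : Finset ι) (b : K) (L p v : ι → K) : K :=
  b / (#s : K) ^ 2 * (∑ i ∈ s, v i * L i ^ 2 / p i) / ((#s : K)⁻¹ * ∑ i ∈ s, L i) ^ 2

theorem sum_importanceProb (hS : ∑ i ∈ s, L i ≠ 0) : ∑ i ∈ s, importanceProb s b L i = b := by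
  simp only [importanceProb]
  rw [← sum_div, ← mul_sum, mul_div_cancel_right₀ b hS]

theorem sq_div_importanceProb {i : ι} (hL : L i ≠ 0) :
    L i ^ 2 / importanceProb s b L i = L i * ((∑ j ∈ s, L j) / b) := by
  rw [importanceProb, div_div_eq_mul_div, sq, mul_assoc, mul_comm b, mul_div_mul_left _ _ hL,
    mul_div_assoc]

theorem samplingAlpha_importanceProb [CharZero K] (hb : b ≠ 0) (hL : ∀ i ∈ s, L i ≠ 0)
    (hS : ∑ i ∈ s, L i ≠ 0) (v : ι → K) :
    samplingAlpha s b L (importanceProb s b L) v = (∑ i ∈ s, v i * L i) / ∑ i ∈ s, L i := by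
  have hcard : (#s : K) ≠ 0 :=
    Nat.cast_ne_zero.mpr (card_ne_zero.mpr (nonempty_of_sum_ne_zero hS))
  have hsum : ∑ i ∈ s, v i * L i ^ 2 / importanceProb s b L i
      = (∑ i ∈ s, v i * L i) * ((∑ i ∈ s, L i) / b) := by
    rw [sum_mul]
    refine sum_congr rfl fun i hi => ?_
    rw [mul_div_assoc, sq_div_importanceProb (hL i hi), mul_assoc]
  rw [samplingAlpha, hsum]
  field_simp

theorem sum_one_sub_importanceProb_mul_div_sum (hS : ∑ i ∈ s, L i ≠ 0) :
    (∑ i ∈ s, (1 - importanceProb s b L i) * L i) / ∑ i ∈ s, L i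
      = 1 - b * (∑ i ∈ s, L i ^ 2) / (∑ i ∈ s, L i) ^ 2 := by
  have hprob : ∑ i ∈ s, importanceProb s b L i * L i
      = b * (∑ i ∈ s, L i ^ 2) / ∑ i ∈ s, L i := by
    rw [mul_sum, sum_div]
    refine sum_congr rfl fun i _ => ?_
    rw [importanceProb]
    ring
  simp only [sub_mul, one_mul, sum_sub_distrib]
  rw [hprob, sub_div, div_self hS, div_div, ← sq]

variable [LinearOrder K] [IsStrictOrderedRing K]

theorem importanceProb_pos {i : ι} (hb : 0 < b) (hL : 0 < L i) (hS : 0 < ∑ j ∈ s, L j) :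
    0 < importanceProb s b L i :=
  div_pos (mul_pos hb hL) hS

theorem importanceProb_le_one_iff {i : ι} (hS : 0 < ∑ j ∈ s, L j) :
    importanceProb s b L i ≤ 1 ↔ b * L i ≤ ∑ j ∈ s, L j :=
  div_le_one hS

theorem inv_card_le_sum_sq_div_sq_sum (hS : ∑ i ∈ s, L i ≠ 0) :
    (#s : K)⁻¹ ≤ (∑ i ∈ s, L i ^ 2) / (∑ i ∈ s, L i) ^ 2 := by
  have hcard : (0 : K) < #s := Nat.cast_pos.mpr (card_pos.mpr (nonempty_of_sum_ne_zero hS))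
  rw [le_div_iff₀ (sq_pos_of_ne_zero hS), inv_mul_le_iff₀ hcard]
  exact sq_sum_le_card_mul_sum_sq

theorem one_sub_mul_sum_sq_div_sq_sum_le (hb : 0 ≤ b) (hS : ∑ i ∈ s, L i ≠ 0) :
    1 - b * (∑ i ∈ s, L i ^ 2) / (∑ i ∈ s, L i) ^ 2 ≤ ((#s : K) - b) / #s := by
  have hcard : (#s : K) ≠ 0 :=
    Nat.cast_ne_zero.mpr (card_ne_zero.mpr (nonempty_of_sum_ne_zero hS))
  calc 1 - b * (∑ i ∈ s, L i ^ 2) / (∑ i ∈ s, L i) ^ 2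
      = 1 - b * ((∑ i ∈ s, L i ^ 2) / (∑ i ∈ s, L i) ^ 2) := by rw [mul_div_assoc]
    _ ≤ 1 - b * (#s : K)⁻¹ := by gcongr; exact inv_card_le_sum_sq_div_sq_sum hS
    _ = ((#s : K) - b) / #s := by rw [sub_div, div_self hcard, div_eq_mul_inv b]

theorem alpha_independent_sampling_importance_general (hs : s.Nonempty)
    (hL : ∀ i ∈ s, 0 < L i) (hb : 0 < b) (hmax : ∀ i ∈ s, b * L i ≤ ∑ j ∈ s, L j) :
    (∀ i ∈ s, 0 < importanceProb s b L i ∧ importanceProb s b L i ≤ 1) ∧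
    (∑ i ∈ s, importanceProb s b L i = b) ∧
    samplingAlpha s b L (importanceProb s b L) (fun i => 1 - importanceProb s b L i)
      = 1 - b * (∑ i ∈ s, L i ^ 2) / (∑ i ∈ s, L i) ^ 2 ∧
    1 - b * (∑ i ∈ s, L i ^ 2) / (∑ i ∈ s, L i) ^ 2 ≤ ((#s : K) - b) / #s := by
  have hS : 0 < ∑ i ∈ s, L i := sum_pos hL hs
  refine ⟨fun i hi => ⟨importanceProb_pos hb (hL i hi) hS,
    (importanceProb_le_one_iff hS).mpr (hmax i hi)⟩, sum_importanceProb hS.ne', ?_,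
    one_sub_mul_sum_sq_div_sq_sum_le hb.le hS.ne'⟩
  rw [samplingAlpha_importanceProb hb.ne' (fun i hi => (hL i hi).ne') hS.ne',
    sum_one_sub_importanceProb_mul_div_sum hS.ne']

end ImportanceSampling

/-- Value of `α` for the independent sampling with probabilities proportional to the
smoothness constants: if `b · max_i L i ≤ Σ L i` and `p i = b L i / Σ L j`, then
`α = 1 - b (Σ L i ^ 2) / (Σ L i) ^ 2 ≤ (n - b)/n`. -/
theorem alpha_independent_sampling_importance {n : ℕ} (hn : 0 < n)
    (L : Fin n → ℝ) (hLpos : ∀ i, 0 < L i)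
    (b : ℝ) (hb0 : 0 < b) (hbn : b ≤ n)
    (hmax : b * (Finset.univ.sup' ⟨⟨0, hn⟩, Finset.mem_univ _⟩ L) ≤ ∑ j, L j)
    (p : Fin n → ℝ) (hp : ∀ i, p i = b * L i / ∑ j, L j)
    (Lbar : ℝ) (hLbar : Lbar = (n : ℝ)⁻¹ * ∑ i, L i) :
    (∀ i, 0 < p i ∧ p i ≤ 1) ∧ (∑ i, p i = b) ∧
    (b / (n : ℝ) ^ 2) * (∑ i, (1 - p i) * L i ^ 2 / p i) / Lbar ^ 2
      = 1 - b * (∑ i, L i ^ 2) / (∑ i, L i) ^ 2 ∧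
    1 - b * (∑ i, L i ^ 2) / (∑ i, L i) ^ 2 ≤ ((n : ℝ) - b) / n := by
  obtain rfl : p = importanceProb Finset.univ b L := funext hp
  have hle (i : Fin n) : b * L i ≤ ∑ j, L j :=
    (mul_le_mul_of_nonneg_left (Finset.le_sup' L (Finset.mem_univ i)) hb0.le).trans hmax
  simpa [samplingAlpha, hLbar] using alpha_independent_sampling_importance_general
    ⟨⟨0, hn⟩, Finset.mem_univ _⟩ (fun i _ => hLpos i) hb0 (fun i _ => hle i)
end

section
/- Let each f_i : R^d → R be convex and differentiable with L_i-Lipschitz gradient, let L̄ = (1/n) Σ_{i=1}^n L_i and set the importance sampling probabilities p_i = L_i/(Σ_{j=1}^n L_j). Fix x, u ∈ R^d and a step size 0 < η < 2/L̄, set x' = x − η u, draw a single random index i ∈ [n] with Prob(i = j) = p_j, and define the SARAH update u' := u + (1/(n p_i))(∇f_i(x') − ∇f_i(x)). Then E‖u' − u‖² ≤ (η L̄/(2 − η L̄))·( ‖u‖² − E‖u'‖² ), where the expectation is over the random index i. -/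
open scoped BigOperators

/-!
The inequality already holds for every outcome of the random index; the expectation is an average
of these. By Baillon–Haddad, `∇f_i` is `1/L_i`-cocoercive, and the importance weights are exactly
those for which all the rescaled fields `(n p_i)⁻¹ ∇f_i = (L̄ / L_i) ∇f_i` are cocoercive with the
same constant `1/L̄`. If `v` is the increment of such a field from `x` to `x - η u`, cocoercivity
reads `‖v‖² ≤ -η L̄ ⟪u, v⟫`, and since `‖u‖² - ‖u + v‖² = -2 ⟪u, v⟫ - ‖v‖²` this is
`(2 - η L̄) ‖v‖² ≤ η L̄ (‖u‖² - ‖u + v‖²)`.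
-/

open AffineMap (lineMap)
open scoped RealInnerProductSpace Gradient

section Cocoercive

variable {E : Type*} [NormedAddCommGroup E] [InnerProductSpace ℝ E] {β η : ℝ} {F : E → E}

/-- `F` is a `β`-cocoercive vector field. The sign of `β` is not restricted: `β = 0` is
monotonicity, and in applications `β` is the inverse of a Lipschitz constant. -/
def IsCocoercive (β : ℝ) (F : E → E) : Prop :=
  ∀ x y, β * ‖F x - F y‖ ^ 2 ≤ ⟪F x - F y, x - y⟫

lemma IsCocoercive.const_smul (hF : IsCocoercive β F) {a : ℝ} (ha : 0 < a) :
    IsCocoercive (β / a) (fun x => a • F x) := by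
  intro x y
  rw [← smul_sub, norm_smul_of_nonneg ha.le, real_inner_smul_left]
  calc β / a * (a * ‖F x - F y‖) ^ 2 = a * (β * ‖F x - F y‖ ^ 2) := by field_simp
    _ ≤ a * ⟪F x - F y, x - y⟫ := by gcongr; exact hF x y

lemma IsCocoercive.mul_norm_sub_sq_le (hF : IsCocoercive β F) (η : ℝ) (x u : E) :
    (2 * β - η) * ‖F (x - η • u) - F x‖ ^ 2 ≤
      η * (‖u‖ ^ 2 - ‖u + (F (x - η • u) - F x)‖ ^ 2) := by
  have hinner := hF (x - η • u) x
  rw [sub_sub_cancel_left, inner_neg_right, real_inner_smul_right, real_inner_comm] at hinner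
  rw [norm_add_sq_real]
  linarith

lemma IsCocoercive.norm_sub_sq_le {L : ℝ} (hL : 0 < L) (hF : IsCocoercive L⁻¹ F)
    (hη : η < 2 / L) (x u : E) :
    ‖F (x - η • u) - F x‖ ^ 2 ≤
      η * L / (2 - η * L) * (‖u‖ ^ 2 - ‖u + (F (x - η • u) - F x)‖ ^ 2) := by
  have hden : 0 < 2 - η * L := sub_pos.2 ((lt_div_iff₀ hL).1 hη)
  have hstep := mul_le_mul_of_nonneg_left (hF.mul_norm_sub_sq_le η x u) hL.le
  have hscale : L * (2 * L⁻¹ - η) = 2 - η * L := by field_simp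
  rw [← mul_assoc, hscale] at hstep
  rw [div_mul_eq_mul_div, le_div_iff₀ hden]
  linarith

end Cocoercive

section Gradient

variable {E : Type*} [NormedAddCommGroup E] [InnerProductSpace ℝ E] [CompleteSpace E]
  {f : E → ℝ} {L : ℝ}

lemma hasDerivAt_comp_lineMap_of_hasGradientAt {g x y : E} {t : ℝ}
    (hf : HasGradientAt f g (lineMap x y t)) :
    HasDerivAt (f ∘ lineMap x y) ⟪g, y - x⟫ t := by
  simpa using! hf.hasFDerivAt.comp_hasDerivAt t AffineMap.hasDerivAt_lineMap

lemma add_inner_le_of_convexOn_of_hasGradientAt {s : Set E} (hc : ConvexOn ℝ s f) {g x y : E}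
    (hx : x ∈ s) (hy : y ∈ s) (hf : HasGradientAt f g x) :
    f x + ⟪g, y - x⟫ ≤ f y := by
  have hline := hc.comp_affineMap (lineMap (k := ℝ) x y)
  have hderiv : HasDerivAt (f ∘ lineMap x y) ⟪g, y - x⟫ (0 : ℝ) :=
    hasDerivAt_comp_lineMap_of_hasGradientAt (by rwa [AffineMap.lineMap_apply_zero])
  have hslope := hline.le_slope_of_hasDerivAt (by simpa using hx) (by simpa using hy)
    one_pos hderiv
  simp only [slope_def_field, Function.comp_apply, AffineMap.lineMap_apply_zero,
    AffineMap.lineMap_apply_one, sub_zero, div_one] at hslope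
  linarith

lemma le_add_inner_add_sq_of_norm_gradient_sub_le (hf : Differentiable ℝ f) {x : E}
    (hlip : ∀ z, ‖∇ f z - ∇ f x‖ ≤ L * ‖z - x‖) (y : E) :
    f y ≤ f x + ⟪∇ f x, y - x⟫ + L / 2 * ‖y - x‖ ^ 2 := by
  let model (t : ℝ) : ℝ := f x + t * ⟪∇ f x, y - x⟫ + t ^ 2 * (L / 2 * ‖y - x‖ ^ 2)
  have hf_line (t : ℝ) := hasDerivAt_comp_lineMap_of_hasGradientAt
    (hf (lineMap x y t)).hasGradientAt
  have hmodel (t : ℝ) :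
      HasDerivAt model (⟪∇ f x, y - x⟫ + t * (L * ‖y - x‖ ^ 2)) t := by
    have hlin := ((hasDerivAt_id t).mul_const ⟪∇ f x, y - x⟫).const_add (f x)
    have hquad := (hasDerivAt_pow 2 t).mul_const (L / 2 * ‖y - x‖ ^ 2)
    exact (hlin.add hquad).congr_deriv (by push_cast; ring)
  have hderiv_le (t : ℝ) (ht : 0 ≤ t) :
      ⟪∇ f (lineMap x y t), y - x⟫ ≤ ⟪∇ f x, y - x⟫ + t * (L * ‖y - x‖ ^ 2) := by
    rw [← sub_le_iff_le_add', ← inner_sub_left]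
    have hnorm : ‖lineMap x y t - x‖ = t * ‖y - x‖ := by
      rw [← vsub_eq_sub, AffineMap.lineMap_vsub_left, vsub_eq_sub, norm_smul_of_nonneg ht]
    calc ⟪∇ f (lineMap x y t) - ∇ f x, y - x⟫
        ≤ ‖∇ f (lineMap x y t) - ∇ f x‖ * ‖y - x‖ := real_inner_le_norm _ _
      _ ≤ L * (t * ‖y - x‖) * ‖y - x‖ := by gcongr; exact hnorm ▸ hlip _
      _ = t * (L * ‖y - x‖ ^ 2) := by ring
  have hle := image_le_of_deriv_right_le_deriv_boundary
    (fun t _ => (hf_line t).continuousAt.continuousWithinAt)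
    (fun t _ => (hf_line t).hasDerivWithinAt) (B := model) (by simp [model])
    (fun t _ => (hmodel t).continuousAt.continuousWithinAt)
    (fun t _ => (hmodel t).hasDerivWithinAt) (fun t ht => hderiv_le t ht.1)
    (Set.right_mem_Icc.2 zero_le_one)
  simpa [model] using hle

lemma add_inner_add_norm_gradient_sub_sq_le (hc : ConvexOn ℝ Set.univ f)
    (hf : Differentiable ℝ f) (hL : 0 < L) (hlip : ∀ x y, ‖∇ f x - ∇ f y‖ ≤ L * ‖x - y‖)
    (x y : E) :
    f x + ⟪∇ f x, y - x⟫ + L⁻¹ / 2 * ‖∇ f y - ∇ f x‖ ^ 2 ≤ f y := by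
  set g := ∇ f y - ∇ f x with hg
  -- `z` minimizes the quadratic upper model of `f` at `y` minus the tangent plane at `x`.
  set z := y - L⁻¹ • g with hz
  have hlower : f x + ⟪∇ f x, z - x⟫ ≤ f z :=
    add_inner_le_of_convexOn_of_hasGradientAt hc (Set.mem_univ x) (Set.mem_univ z)
      (hf x).hasGradientAt
  have hupper : f z ≤ f y + ⟪∇ f y, z - y⟫ + L / 2 * ‖z - y‖ ^ 2 :=
    le_add_inner_add_sq_of_norm_gradient_sub_le hf (fun w => hlip w y) z
  have htangent : ⟪∇ f x, z - x⟫ = ⟪∇ f x, y - x⟫ + ⟪∇ f x, z - y⟫ := by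
    rw [← inner_add_right, sub_add_sub_cancel']
  have hinner : ⟪∇ f y, z - y⟫ - ⟪∇ f x, z - y⟫ = -(L⁻¹ * ‖g‖ ^ 2) := by
    rw [← inner_sub_left, ← hg, hz, sub_sub_cancel_left, inner_neg_right, real_inner_smul_right,
      real_inner_self_eq_norm_sq]
  have hquad : L / 2 * ‖z - y‖ ^ 2 = L⁻¹ / 2 * ‖g‖ ^ 2 := by
    rw [hz, sub_sub_cancel_left, norm_neg, norm_smul_of_nonneg (inv_nonneg.2 hL.le)]
    field_simp
  linarith

lemma isCocoercive_gradient_of_convexOn (hc : ConvexOn ℝ Set.univ f) (hf : Differentiable ℝ f)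
    (hL : 0 < L) (hlip : ∀ x y, ‖∇ f x - ∇ f y‖ ≤ L * ‖x - y‖) :
    IsCocoercive L⁻¹ (∇ f) := by
  intro x y
  have hxy := add_inner_add_norm_gradient_sub_sq_le hc hf hL hlip x y
  have hyx := add_inner_add_norm_gradient_sub_sq_le hc hf hL hlip y x
  rw [norm_sub_rev, ← neg_sub x y, inner_neg_right] at hxy
  rw [inner_sub_left]
  linarith

end Gradient

section ImportanceSampling

variable {ι : Type*} [Fintype ι] {E : Type*} [NormedAddCommGroup E]
  [InnerProductSpace ℝ E]

lemma sum_mul_le_mul_sub_sum_mul {p a b : ι → ℝ} (hp : ∀ i, 0 ≤ p i) (hp_sum : ∑ i, p i = 1)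
    {c m : ℝ} (h : ∀ i, a i ≤ c * (m - b i)) :
    ∑ i, p i * a i ≤ c * (m - ∑ i, p i * b i) := by
  calc ∑ i, p i * a i ≤ ∑ i, p i * (c * (m - b i)) :=
        Finset.sum_le_sum fun i _ => mul_le_mul_of_nonneg_left (h i) (hp i)
    _ = c * ((∑ i, p i) * m - ∑ i, p i * b i) := by
        rw [Finset.sum_mul, ← Finset.sum_sub_distrib, Finset.mul_sum]
        exact Finset.sum_congr rfl fun i _ => by ring
    _ = c * (m - ∑ i, p i * b i) := by rw [hp_sum, one_mul]

theorem sarah_importance_sampling_step_convex_general [Nonempty ι] (F : ι → E → E)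
    (L : ι → ℝ) (hL : ∀ i, 0 < L i) (hF : ∀ i, IsCocoercive (L i)⁻¹ (F i))
    (Lbar : ℝ) (hLbar : Lbar = (Fintype.card ι : ℝ)⁻¹ * ∑ i, L i)
    (p : ι → ℝ) (hp : ∀ i, p i = L i / ∑ j, L j)
    (x u : E) (η : ℝ) (hη : η < 2 / Lbar) (x' : E) (hx' : x' = x - η • u) :
    ∑ i, p i * ‖(u + ((Fintype.card ι : ℝ) * p i)⁻¹ • (F i x' - F i x)) - u‖ ^ 2
      ≤ (η * Lbar / (2 - η * Lbar)) *
        (‖u‖ ^ 2 - ∑ i, p i *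
          ‖u + ((Fintype.card ι : ℝ) * p i)⁻¹ • (F i x' - F i x)‖ ^ 2) := by
  have hsum : 0 < ∑ i, L i := Finset.sum_pos (fun i _ => hL i) Finset.univ_nonempty
  have hLbar_pos : 0 < Lbar := by rw [hLbar]; positivity
  have hp_nonneg (i : ι) : 0 ≤ p i := hp i ▸ div_nonneg (hL i).le hsum.le
  have hp_sum : ∑ i, p i = 1 := by
    simp only [hp, ← Finset.sum_div, div_self hsum.ne']
  have hscale (i : ι) : ((Fintype.card ι : ℝ) * p i)⁻¹ = Lbar / L i := by
    rw [hp, hLbar, mul_inv, inv_div, mul_div_assoc]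
  have hcoco (i : ι) : IsCocoercive Lbar⁻¹ (fun y => (Lbar / L i) • F i y) := by
    have hconst : (L i)⁻¹ / (Lbar / L i) = Lbar⁻¹ := by
      have := (hL i).ne'
      field_simp
    exact hconst ▸ (hF i).const_smul (div_pos hLbar_pos (hL i))
  refine sum_mul_le_mul_sub_sum_mul hp_nonneg hp_sum fun i => ?_
  simpa only [hx', hscale, add_sub_cancel_left, smul_sub] using
    (hcoco i).norm_sub_sq_le hLbar_pos hη x u

end ImportanceSampling

/-- One-step bound for SARAH with importance sampling (convex case):
`E‖u' - u‖² ≤ (η L̄ / (2 - η L̄)) (‖u‖² - E‖u'‖²)`. -/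
theorem sarah_importance_sampling_step_convex {n d : ℕ} (hn : 0 < n)
    (f : Fin n → EuclideanSpace ℝ (Fin d) → ℝ)
    (L : Fin n → ℝ) (hL : ∀ i, 0 < L i)
    (hconv : ∀ i, ConvexOn ℝ Set.univ (f i))
    (hdiff : ∀ i, Differentiable ℝ (f i))
    (hlip : ∀ i x y, ‖gradient (f i) x - gradient (f i) y‖ ≤ L i * ‖x - y‖)
    (Lbar : ℝ) (hLbar : Lbar = (n : ℝ)⁻¹ * ∑ i, L i)
    (p : Fin n → ℝ) (hp : ∀ i, p i = L i / ∑ j, L j)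
    (x u : EuclideanSpace ℝ (Fin d))
    (η : ℝ) (hη0 : 0 < η) (hη : η < 2 / Lbar)
    (x' : EuclideanSpace ℝ (Fin d)) (hx' : x' = x - η • u) :
    ∑ i, p i *
        ‖(u + ((n : ℝ) * p i)⁻¹ • (gradient (f i) x' - gradient (f i) x)) - u‖ ^ 2
      ≤ (η * Lbar / (2 - η * Lbar)) *
        (‖u‖ ^ 2 - ∑ i, p i *
          ‖u + ((n : ℝ) * p i)⁻¹ • (gradient (f i) x' - gradient (f i) x)‖ ^ 2) := by
  have : NeZero n := ⟨hn.ne'⟩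
  have hcoco (i : Fin n) : IsCocoercive (L i)⁻¹ (gradient (f i)) :=
    isCocoercive_gradient_of_convexOn (hconv i) (hdiff i) (hL i) (hlip i)
  simpa only [Fintype.card_fin] using sarah_importance_sampling_step_convex_general
    (fun i => gradient (f i)) L hL hcoco Lbar (by rwa [Fintype.card_fin]) p hp x u η hη x' hx'
end
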